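/- Boundary Poincaré inequality: there is a constant C > 0, depending only on n, d, and C₀, such that for every u ∈ W, every x ∈ Γ, and every r > 0 with Tu = 0 σ-almost everywhere on Γ ∩ B(x,r), one has ⨍_{B(x,r)} |u(y)| dy ≤ C r^{−d} ∫_{B(x,r)} |∇u| dm. -/

import Mathlib

open MeasureTheory Metric Set Filter
open scoped ENNReal NNReal Topology

noncomputable section

/-- Euclidean space `ℝⁿ`. -/
abbrev Euc (n : ℕ) := EuclideanSpace ℝ (Fin n)

/-- `Γ ⊆ ℝⁿ` is `d`-Ahlfors regular with constant `C₀`. -/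
def AhlforsRegular (n : ℕ) (d C₀ : ℝ) (Γ : Set (Euc n)) : Prop :=
  ∀ x ∈ Γ, ∀ r : ℝ, 0 < r →
    ENNReal.ofReal (C₀⁻¹ * r ^ d) ≤ μH[d] (Γ ∩ ball x r) ∧
      μH[d] (Γ ∩ ball x r) ≤ ENNReal.ofReal (C₀ * r ^ d)

/-- The weight `w(x) = dist(x, Γ) ^ (d + 1 - n)`. -/
def weightW (n : ℕ) (d : ℝ) (Γ : Set (Euc n)) (x : Euc n) : ℝ :=
  infDist x Γ ^ (d + 1 - (n : ℝ))

/-- The measure `m` with density `w` with respect to Lebesgue measure. -/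
def measW (n : ℕ) (d : ℝ) (Γ : Set (Euc n)) : Measure (Euc n) :=
  volume.withDensity fun x => ENNReal.ofReal (weightW n d Γ x)

/-- `v` is a distributional gradient of `u` on the open set `E`: for every smooth
compactly supported test function `φ` with support in `E`, `∫_E u ∇φ = -∫_E φ v`. -/
def IsDistribGradOn {n : ℕ} (u : Euc n → ℝ) (v : Euc n → Euc n) (E : Set (Euc n)) : Prop :=
  ∀ φ : Euc n → ℝ, ContDiff ℝ (⊤ : ℕ∞) φ → HasCompactSupport φ → tsupport φ ⊆ E →
    ∫ x in E, u x • gradient φ x = -∫ x in E, φ x • v x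

/-- The averages of `u` over small balls centered at `x` converge to `t`. -/
def HasTraceAt {n : ℕ} (u : Euc n → ℝ) (x : Euc n) (t : ℝ) : Prop :=
  Tendsto (fun ρ : ℝ => ⨍ y in ball x ρ, u y) (𝓝[>] (0 : ℝ)) (𝓝 t)

/-- `u` belongs to the weighted Sobolev space `W = Ẇ^{1,2}_w(Ω)`, `Ω = Γᶜ`, with
distributional gradient `v` on `Ω` lying in `L²(Ω, m)`. -/
structure MemW (n : ℕ) (d : ℝ) (Γ : Set (Euc n)) (u : Euc n → ℝ) (v : Euc n → Euc n) :
    Prop where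
  locInt : LocallyIntegrableOn u Γᶜ volume
  gradLocInt : LocallyIntegrableOn v Γᶜ volume
  isGrad : IsDistribGradOn u v Γᶜ
  l2 : ∫⁻ x in Γᶜ, ENNReal.ofReal (‖v x‖ ^ 2) ∂(measW n d Γ) < ⊤

/-- `u` belongs to the local space `W_r(E)`: `u ∈ L¹_loc(E)` and `φ u` (extended by `0`)
belongs to `W` for every smooth compactly supported `φ` with support in `E`. -/
def MemWrOn (n : ℕ) (d : ℝ) (Γ : Set (Euc n)) (E : Set (Euc n)) (u : Euc n → ℝ) : Prop :=
  LocallyIntegrableOn u E volume ∧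
    ∀ φ : Euc n → ℝ, ContDiff ℝ (⊤ : ℕ∞) φ → HasCompactSupport φ → tsupport φ ⊆ E →
      ∃ vφ : Euc n → Euc n, MemW n d Γ (fun x => φ x * u x) vφ

/-- Degenerate ellipticity and boundedness conditions for the matrix `A`. -/
def EllipticOn (n : ℕ) (d : ℝ) (Γ : Set (Euc n)) (A : Euc n → Euc n →L[ℝ] Euc n)
    (C₁ : ℝ) : Prop :=
  ∀ x, x ∉ Γ →
    (∀ ξ ζ : Euc n, |∑ i, A x ξ i * ζ i| ≤ C₁ * weightW n d Γ x * ‖ξ‖ * ‖ζ‖) ∧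
      ∀ ξ : Euc n, C₁⁻¹ * weightW n d Γ x * ‖ξ‖ ^ 2 ≤ ∑ i, A x ξ i * ξ i

/-- `u`, with gradient `v`, is a weak subsolution of `- div A ∇u = 0` on `U ⊆ Ω = Γᶜ`. -/
def SubsolOn {n : ℕ} (Γ : Set (Euc n)) (A : Euc n → Euc n →L[ℝ] Euc n)
    (v : Euc n → Euc n) (U : Set (Euc n)) : Prop :=
  ∀ φ : Euc n → ℝ, ContDiff ℝ (⊤ : ℕ∞) φ → HasCompactSupport φ → tsupport φ ⊆ U →
    (∀ x, 0 ≤ φ x) → ∫ x in Γᶜ, ∑ i, A x (v x) i * gradient φ x i ≤ 0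

/-- `u`, with gradient `v`, is a weak supersolution of `- div A ∇u = 0` on `U ⊆ Ω = Γᶜ`. -/
def SupersolOn {n : ℕ} (Γ : Set (Euc n)) (A : Euc n → Euc n →L[ℝ] Euc n)
    (v : Euc n → Euc n) (U : Set (Euc n)) : Prop :=
  ∀ φ : Euc n → ℝ, ContDiff ℝ (⊤ : ℕ∞) φ → HasCompactSupport φ → tsupport φ ⊆ U →
    (∀ x, 0 ≤ φ x) → 0 ≤ ∫ x in Γᶜ, ∑ i, A x (v x) i * gradient φ x i

/-- `u`, with gradient `v`, is a weak solution of `- div A ∇u = 0` on `U ⊆ Ω = Γᶜ`. -/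
def SolOn {n : ℕ} (Γ : Set (Euc n)) (A : Euc n → Euc n →L[ℝ] Euc n)
    (v : Euc n → Euc n) (U : Set (Euc n)) : Prop :=
  ∀ φ : Euc n → ℝ, ContDiff ℝ (⊤ : ℕ∞) φ → HasCompactSupport φ → tsupport φ ⊆ U →
    ∫ x in Γᶜ, ∑ i, A x (v x) i * gradient φ x i = 0

/-- The weight `t⁻ⁿ`. -/
def cw (n : ℕ) (t : ℝ) : ℝ≥0∞ := ENNReal.ofReal ((t ^ n)⁻¹)

lemma measurable_cw (n : ℕ) : Measurable (cw n) := by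
  unfold cw; fun_prop

/-- The kernel. -/
def kk (n : ℕ) (R : ℝ) (ξ z : Euc n) : ℝ≥0∞ :=
  ∫⁻ t in Ioo (0:ℝ) 1, (if dist ξ z < t * R then cw n t else 0)

lemma measurable_kk_integrand (n : ℕ) (R : ℝ) :
    Measurable (fun p : (Euc n × Euc n) × ℝ =>
      if dist p.1.1 p.1.2 < p.2 * R then cw n p.2 else 0) := by
  refine Measurable.ite ?_ ((measurable_cw n).comp measurable_snd) measurable_const
  refine measurableSet_lt ?_ ?_
  · exact (measurable_fst.fst).dist (measurable_fst.snd)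
  · fun_prop

lemma measurable_kk (n : ℕ) (R : ℝ) : Measurable (fun p : Euc n × Euc n => kk n R p.1 p.2) := by
  unfold kk
  exact (measurable_kk_integrand n R).lintegral_prod_right'

lemma measurable_kk_left (n : ℕ) (R : ℝ) (z : Euc n) : Measurable (fun ξ => kk n R ξ z) := by
  have hm : Measurable (fun ξ : Euc n => (ξ, z)) := by fun_prop
  have hm2 := (measurable_kk n R).comp hm
  exact hm2

lemma measurable_kk_right (n : ℕ) (R : ℝ) (ξ : Euc n) : Measurable (fun z => kk n R ξ z) := by
  have hm : Measurable (fun z : Euc n => (ξ, z)) := by fun_prop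
  have hm2 := (measurable_kk n R).comp hm
  exact hm2

lemma lintegral_kk (n : ℕ) (R : ℝ) (ξ : Euc n) (μ : Measure (Euc n)) [SFinite μ] :
    ∫⁻ z, kk n R ξ z ∂μ = ∫⁻ t in Ioo (0:ℝ) 1, cw n t * μ (ball ξ (t * R)) := by
  unfold kk
  rw [lintegral_lintegral_swap]
  · refine lintegral_congr fun t => ?_
    have : ∀ z, (if dist ξ z < t * R then cw n t else 0)
        = (ball ξ (t * R)).indicator (fun _ => cw n t) z := by
      intro z; simp [indicator, mem_ball, dist_comm]
    simp_rw [this]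
    rw [lintegral_indicator measurableSet_ball]; simp
  · exact ((measurable_kk_integrand n R).comp
      (((measurable_const (a := ξ)).prodMk measurable_fst).prodMk measurable_snd)).aemeasurable

lemma lint_scale (n : ℕ) (g : Euc n → ℝ≥0∞) (hg : Measurable g) (z : Euc n) (R t : ℝ)
    (ht : 0 < t) :
    ∫⁻ y in ball z R, g (z + t • (y - z)) = cw n t * ∫⁻ ξ in ball z (t * R), g ξ := by
  have h1 : ∀ f : Euc n → ℝ≥0∞, Measurable f → ∫⁻ y, f (t • y) = cw n t * ∫⁻ y, f y := by
    intro f hf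
    rw [← lintegral_map (f := f) (g := fun y => t • y) hf (by fun_prop),
      Measure.map_addHaar_smul volume ht.ne']
    simp [cw, abs_of_pos ht]
  have h2 := h1 ((ball (0 : Euc n) (t * R)).indicator fun y => g (z + y))
    ((hg.comp (by fun_prop)).indicator measurableSet_ball)
  rw [← lintegral_indicator measurableSet_ball, ← lintegral_indicator measurableSet_ball,
    ← lintegral_add_left_eq_self _ z]
  rw [← lintegral_add_left_eq_self (fun x => (ball z (t * R)).indicator g x) z]
  refine Eq.trans (lintegral_congr fun y => ?_) (h2.trans ?_)
  · have : ‖t • y‖ < t * R ↔ ‖y‖ < R := by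
      rw [norm_smul, Real.norm_of_nonneg ht.le]
      exact mul_lt_mul_iff_right₀ ht
    simp [indicator, this]
  · congr 1
    refine lintegral_congr fun y => ?_
    simp [indicator]

lemma lint_seg (n : ℕ) (g : Euc n → ℝ≥0∞) (hg : Measurable g) (z : Euc n) (R : ℝ) :
    ∫⁻ y in ball z R, ∫⁻ t in Ioo (0:ℝ) 1, g (z + t • (y - z)) = ∫⁻ ξ, g ξ * kk n R ξ z := by
  rw [lintegral_lintegral_swap]
  · unfold kk
    have h : ∀ ξ, g ξ * ∫⁻ t in Ioo (0:ℝ) 1, (if dist ξ z < t * R then cw n t else 0)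
        = ∫⁻ t in Ioo (0:ℝ) 1, g ξ * (if dist ξ z < t * R then cw n t else 0) := by
      intro ξ
      rw [lintegral_const_mul]
      have hm : Measurable (fun t : ℝ => ((ξ, z), t)) := by fun_prop
      have hm2 := (measurable_kk_integrand n R).comp hm
      exact hm2
    simp_rw [h]
    symm
    rw [lintegral_lintegral_swap]
    · symm
      refine setLIntegral_congr_fun measurableSet_Ioo fun t ht => ?_
      rw [lint_scale n g hg z R t ht.1, ← lintegral_indicator measurableSet_ball,
        ← lintegral_const_mul _ (hg.indicator measurableSet_ball)]
      refine lintegral_congr fun ξ => ?_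
      simp [indicator, mem_ball, mul_comm]
    · refine (Measurable.mul (hg.comp measurable_fst) ?_).aemeasurable
      have hm : Measurable (fun p : Euc n × ℝ => ((p.1, z), p.2)) := by fun_prop
      have hm2 := (measurable_kk_integrand n R).comp hm
      exact hm2
  · refine (hg.comp ?_).aemeasurable
    fun_prop

lemma vol_ball (n : ℕ) (z : Euc n) {s : ℝ} (hs : 0 < s) :
    volume (ball z s) = ENNReal.ofReal (s ^ n) * volume (ball (0 : Euc n) 1) := by
  have := Measure.addHaar_ball_of_pos (volume : Measure (Euc n)) z hs
  simpa using this

lemma lintegral_kk_vol (n : ℕ) (R : ℝ) (hR : 0 < R) (ξ : Euc n) :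
    ∫⁻ z, kk n R ξ z = volume (ball (0 : Euc n) R) := by
  rw [lintegral_kk]
  have : ∀ t ∈ Ioo (0:ℝ) 1, cw n t * volume (ball ξ (t * R)) = volume (ball (0 : Euc n) R) := by
    intro t ht
    rw [vol_ball n ξ (mul_pos ht.1 hR), vol_ball n 0 hR, ← mul_assoc, cw,
      ← ENNReal.ofReal_mul (by have := ht.1; positivity)]
    congr 2
    have := ht.1.ne'
    rw [mul_pow]
    field_simp
  rw [setLIntegral_congr_fun measurableSet_Ioo this]
  simp

lemma kk_lower (n : ℕ) {R ρ : ℝ} (hρ : 0 < ρ) (hR : 2 * ρ ≤ R) (ξ z : Euc n)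
    (h : dist ξ z < 2 * ρ) :
    ENNReal.ofReal ((R / ρ) ^ n * (ρ / R)) ≤ 2 ^ n * kk n (2 * R) ξ z := by
  have hRpos : 0 < R := by linarith
  have h1 : ∫⁻ _t in Ioo (ρ / R) (2 * ρ / R), ENNReal.ofReal ((((2 * ρ / R)) ^ n)⁻¹)
      ≤ kk n (2 * R) ξ z := by
    unfold kk
    have hsub : Ioo (ρ / R) (2 * ρ / R) ⊆ Ioo (0:ℝ) 1 := by
      intro t ht
      refine ⟨lt_trans (by positivity) ht.1, lt_of_lt_of_le ht.2 ?_⟩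
      rw [div_le_one hRpos]; exact hR
    refine le_trans ?_ (lintegral_mono_set hsub)
    refine setLIntegral_mono' measurableSet_Ioo fun t ht => ?_
    have ht0 : 0 < t := lt_trans (by positivity) ht.1
    have h2 : dist ξ z < t * (2 * R) := by
      have := (div_lt_iff₀ hRpos).1 ht.1
      nlinarith
    rw [if_pos h2, cw]
    apply ENNReal.ofReal_le_ofReal
    have := ht.2.le
    gcongr
  have h3 : ∫⁻ _t in Ioo (ρ / R) (2 * ρ / R), ENNReal.ofReal ((((2 * ρ / R)) ^ n)⁻¹)
      = ENNReal.ofReal ((((2 * ρ / R)) ^ n)⁻¹ * (ρ / R)) := by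
    rw [setLIntegral_const, Real.volume_Ioo, ← ENNReal.ofReal_mul (by positivity)]
    congr 2; ring
  rw [h3] at h1
  calc ENNReal.ofReal ((R / ρ) ^ n * (ρ / R))
      = 2 ^ n * ENNReal.ofReal ((((2 * ρ / R)) ^ n)⁻¹ * (ρ / R)) := by
        have : (2 : ℝ≥0∞) ^ n = ENNReal.ofReal (2 ^ n) := by
          rw [ENNReal.ofReal_pow (by norm_num)]; simp
        rw [this, ← ENNReal.ofReal_mul (by positivity)]
        congr 1
        rw [div_pow, div_pow, mul_pow]
        field_simp
    _ ≤ _ := by gcongr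

lemma kk_avg (n : ℕ) {R ρ : ℝ} (hρ : 0 < ρ) (hR : 2 * ρ ≤ R) (ξ z : Euc n) :
    ∫⁻ z' in ball z ρ, kk n R ξ z' ≤ (1 + 2 ^ n) * volume (ball z ρ) * kk n (2 * R) ξ z := by
  have hRpos : 0 < R := by linarith
  rw [lintegral_kk]
  set V := volume (ball z ρ) with hV
  have hpt : ∀ t ∈ Ioo (0:ℝ) 1, cw n t * (volume.restrict (ball z ρ)) (ball ξ (t * R)) ≤
      V * (if dist ξ z < t * (2 * R) then cw n t else 0)
       + V * (Ioo (0:ℝ) (ρ / R)).indicator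
          (fun _ => if dist ξ z < 2 * ρ then ENNReal.ofReal ((R / ρ) ^ n) else 0) t := by
    intro t ht
    have ht0 := ht.1
    rw [Measure.restrict_apply measurableSet_ball]
    by_cases hne : (ball ξ (t * R) ∩ ball z ρ).Nonempty
    · obtain ⟨p, hp1, hp2⟩ := hne
      have hd : dist ξ z < t * R + ρ := by
        have := dist_triangle ξ p z
        rw [mem_ball] at hp1 hp2
        rw [dist_comm] at hp1
        linarith
      rcases le_or_gt ρ (t * R) with hc | hc
      · refine le_trans ?_ le_self_add
        rw [if_pos (by linarith), mul_comm]
        gcongr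
        exact measure_mono inter_subset_right
      · refine le_trans ?_ le_add_self
        rw [indicator_of_mem (show t ∈ Ioo (0:ℝ) (ρ / R) from ⟨ht0, (lt_div_iff₀ hRpos).2 hc⟩),
          if_pos (by linarith)]
        calc cw n t * volume (ball ξ (t * R) ∩ ball z ρ)
            ≤ cw n t * volume (ball ξ (t * R)) := by gcongr; exact inter_subset_left
          _ = V * ENNReal.ofReal ((R / ρ) ^ n) := by
            rw [hV, vol_ball n ξ (mul_pos ht0 hRpos), vol_ball n z hρ, cw, ← mul_assoc,
              ← ENNReal.ofReal_mul (by positivity), mul_right_comm,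
              ← ENNReal.ofReal_mul (by positivity)]
            congr 2
            rw [mul_pow, div_pow]; field_simp
          _ ≤ _ := le_rfl
    · rw [not_nonempty_iff_eq_empty.1 hne]; simp
  refine (setLIntegral_mono' measurableSet_Ioo hpt).trans ?_
  have hm1 : Measurable fun t : ℝ => (if dist ξ z < t * (2 * R) then cw n t else 0) :=
    Measurable.ite (measurableSet_lt (by fun_prop) (by fun_prop)) (measurable_cw n)
      measurable_const
  rw [lintegral_add_left (hm1.const_mul V), lintegral_const_mul V hm1]
  have hm2 : Measurable ((Ioo (0:ℝ) (ρ / R)).indicator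
          (fun _ => if dist ξ z < 2 * ρ then ENNReal.ofReal ((R / ρ) ^ n) else 0)) :=
    measurable_const.indicator measurableSet_Ioo
  rw [lintegral_const_mul V hm2]
  have h2 : ∫⁻ t in Ioo (0:ℝ) 1, (Ioo (0:ℝ) (ρ / R)).indicator
          (fun _ => if dist ξ z < 2 * ρ then ENNReal.ofReal ((R / ρ) ^ n) else 0) t
      ≤ 2 ^ n * kk n (2 * R) ξ z := by
    refine (setLIntegral_le_lintegral _ _).trans ?_
    rw [lintegral_indicator measurableSet_Ioo, setLIntegral_const, Real.volume_Ioo]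
    split_ifs with h
    · refine le_trans (le_of_eq ?_) (kk_lower n hρ hR ξ z h)
      rw [← ENNReal.ofReal_mul (by positivity), sub_zero]
    · simp
  calc _ ≤ V * kk n (2 * R) ξ z + V * (2 ^ n * kk n (2 * R) ξ z) := by
        gcongr
        exact le_rfl
    _ = _ := by ring

lemma sigma_ball {n : ℕ} {d C₀ : ℝ} {Γ : Set (Euc n)} (hA : AhlforsRegular n d C₀ Γ)
    (hne : Γ.Nonempty) (ξ : Euc n) (s : ℝ) (hs : 0 < s) :
    μH[d] (Γ ∩ ball ξ s) ≤ if infDist ξ Γ < s then ENNReal.ofReal (C₀ * (2 * s) ^ d) else 0 := by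
  split_ifs with h
  · obtain ⟨p, hp, hps⟩ := (infDist_lt_iff hne).1 h
    refine le_trans (measure_mono ?_) (hA p hp (2 * s) (by positivity)).2
    refine inter_subset_inter_right _ ?_
    intro q hq
    rw [mem_ball] at hq ⊢
    have := dist_triangle q ξ p
    linarith
  · have : Γ ∩ ball ξ s = ∅ := by
      rw [eq_empty_iff_forall_notMem]
      rintro q ⟨hq, hq2⟩
      apply h
      rw [mem_ball, dist_comm] at hq2
      exact (infDist_le_dist_of_mem hq).trans_lt hq2
    simp [this]

lemma sigma_kk {n : ℕ} {d C₀ : ℝ} {Γ : Set (Euc n)} (hA : AhlforsRegular n d C₀ Γ)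
    (hne : Γ.Nonempty) (hdn : d < (n : ℝ) - 1) (hC₀ : 1 ≤ C₀) (x : Euc n)
    (hm : MeasurableSet Γ) {r R : ℝ} (hR : 0 < R) [SFinite (μH[d].restrict (Γ ∩ ball x r))]
    (ξ : Euc n) (hξ : 0 < infDist ξ Γ) :
    ∫⁻ z in Γ ∩ ball x r, kk n R ξ z ∂μH[d] ≤
      ENNReal.ofReal (C₀ * 2 ^ d / ((n : ℝ) - 1 - d) * R ^ ((n : ℝ) - 1)) *
        ENNReal.ofReal (weightW n d Γ ξ) := by
  rw [lintegral_kk]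
  set δ := infDist ξ Γ with hδ
  have hpt : ∀ t ∈ Ioo (0:ℝ) 1,
      cw n t * (μH[d].restrict (Γ ∩ ball x r)) (ball ξ (t * R)) ≤
       (Ioi (δ / R)).indicator
        (fun t => ENNReal.ofReal (C₀ * (2 * R) ^ d * t ^ (d - (n:ℝ)))) t := by
    intro t ht
    have ht0 := ht.1
    rw [Measure.restrict_apply measurableSet_ball]
    have h1 : μH[d] (ball ξ (t * R) ∩ (Γ ∩ ball x r)) ≤ _ :=
      (measure_mono (by intro q hq; exact ⟨hq.2.1, hq.1⟩)).trans
        (sigma_ball hA hne ξ (t * R) (by positivity))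
    refine (mul_le_mul_right h1 _).trans ?_
    by_cases hc : δ < t * R
    · rw [if_pos hc, indicator_of_mem (show t ∈ Ioi (δ / R) from (div_lt_iff₀ hR).2 hc), cw,
        ← ENNReal.ofReal_mul (by positivity)]
      refine ENNReal.ofReal_le_ofReal (le_of_eq ?_)
      rw [Real.rpow_sub ht0, Real.rpow_natCast, show 2 * (t * R) = (2 * R) * t by ring,
        Real.mul_rpow (by positivity) ht0.le]
      field_simp
    · rw [if_neg hc]; simp
  refine (setLIntegral_mono' measurableSet_Ioo hpt).trans ?_
  refine (setLIntegral_le_lintegral _ _).trans ?_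
  rw [lintegral_indicator measurableSet_Ioi]
  have hexp : d - (n:ℝ) < -1 := by linarith
  have hpos : 0 < δ / R := by positivity
  rw [← ofReal_integral_eq_lintegral_ofReal]
  · rw [integral_const_mul, integral_Ioi_rpow_of_lt hexp hpos, weightW,
      ← ENNReal.ofReal_mul]
    · refine ENNReal.ofReal_le_ofReal (le_of_eq ?_)
      have e1 : R ^ ((n:ℝ) - 1) = R ^ d / R ^ (d - (n:ℝ) + 1) := by
        rw [← Real.rpow_sub hR]; congr 1; ring
      have e2 : d + 1 - (n:ℝ) = d - (n:ℝ) + 1 := by ring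
      have e3 : (n:ℝ) - 1 - d = - (d - (n:ℝ) + 1) := by ring
      have e4 : d - (n:ℝ) + 1 ≠ 0 := by linarith
      have e5 : R ^ (d - (n:ℝ) + 1) ≠ 0 := (Real.rpow_pos_of_pos hR _).ne'
      rw [← hδ, Real.div_rpow hξ.le hR.le, Real.mul_rpow (by norm_num) hR.le, e1, e2, e3]
      field_simp
    · have : 0 < (n:ℝ) - 1 - d := by linarith
      positivity
  · exact (integrableOn_Ioi_rpow_of_lt hexp hpos).const_mul _
  · filter_upwards [ae_restrict_mem measurableSet_Ioi] with t ht
    have : 0 < t := hpos.trans ht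
    positivity

/-- Integral of `g` along the segment from `z` to `y` (unnormalised). -/
def segI {n : ℕ} (g : Euc n → ℝ≥0∞) (z y : Euc n) : ℝ≥0∞ :=
  ∫⁻ t in Ioo (0:ℝ) 1, g (z + t • (y - z))

lemma measurable_segI {n : ℕ} {g : Euc n → ℝ≥0∞} (hg : Measurable g) :
    Measurable (fun p : Euc n × Euc n => segI g p.1 p.2) := by
  unfold segI
  have hm : Measurable (fun q : (Euc n × Euc n) × ℝ => q.1.1 + q.2 • (q.1.2 - q.1.1)) := by
    fun_prop
  have h2 := hg.comp hm
  exact h2.lintegral_prod_right'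

lemma segI_double {n : ℕ} {g : Euc n → ℝ≥0∞} (hg : Measurable g) (A B : Set (Euc n))
    (hA : MeasurableSet A) (R : ℝ) (hAB : ∀ z ∈ A, B ⊆ ball z R) :
    ∫⁻ z in A, ∫⁻ y in B, segI g z y ≤ ∫⁻ ξ, g ξ * ∫⁻ z in A, kk n R ξ z := by
  calc ∫⁻ z in A, ∫⁻ y in B, segI g z y
      ≤ ∫⁻ z in A, ∫⁻ ξ, g ξ * kk n R ξ z := by
        refine setLIntegral_mono' hA fun z hz => ?_
        rw [← lint_seg n g hg z R]
        exact lintegral_mono_set (hAB z hz)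
    _ = ∫⁻ ξ, ∫⁻ z in A, g ξ * kk n R ξ z := by
        rw [lintegral_lintegral_swap]
        have h1 : Measurable (fun p : Euc n × Euc n => kk n R p.2 p.1) := by
          have hm : Measurable (fun p : Euc n × Euc n => (p.2, p.1)) := by fun_prop
          have hm2 := (measurable_kk n R).comp hm
          exact hm2
        have h2 : Measurable (fun p : Euc n × Euc n => g p.2) := hg.comp measurable_snd
        exact (h2.mul h1).aemeasurable
    _ = _ := by
        refine lintegral_congr fun ξ => ?_
        rw [lintegral_const_mul _ (measurable_kk_right n R ξ)]

lemma nbhd_vol {n : ℕ} {d C₀ : ℝ} {Γ : Set (Euc n)} (hA : AhlforsRegular n d C₀ Γ)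
    (hne : Γ.Nonempty) (hC₀ : 1 ≤ C₀) (hm : MeasurableSet Γ) {x : Euc n} (hx : x ∈ Γ)
    {r E : ℝ} (hr : 0 < r) (hE : 0 < E) :
    ∃ K : ℝ≥0∞, K ≠ ⊤ ∧ ∀ ε, 0 < ε → ε ≤ E →
      volume ({ξ | infDist ξ Γ < ε} ∩ ball x r) ≤ K * ENNReal.ofReal (ε ^ ((n:ℝ) - d)) := by
  set σ := μH[d].restrict (Γ ∩ ball x (r + 2 * E)) with hσ
  have hfin : σ univ < ⊤ := by
    rw [hσ, Measure.restrict_apply_univ]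
    exact (hA x hx _ (by positivity)).2.trans_lt ENNReal.ofReal_lt_top
  haveI : IsFiniteMeasure σ := ⟨hfin⟩
  refine ⟨σ univ * volume (ball (0 : Euc n) 1) * ENNReal.ofReal (2 ^ n * C₀), ?_, ?_⟩
  · exact ENNReal.mul_ne_top (ENNReal.mul_ne_top hfin.ne measure_ball_lt_top.ne)
      ENNReal.ofReal_ne_top
  intro ε hε hεE
  set N := {ξ | infDist ξ Γ < ε} ∩ ball x r with hN
  have hNm : MeasurableSet N :=
    (measurableSet_lt (continuous_infDist_pt Γ).measurable measurable_const).inter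
      measurableSet_ball
  have hC : 0 < C₀ := by linarith
  have h1 : ∀ ξ ∈ N, ENNReal.ofReal (C₀⁻¹ * ε ^ d) ≤ σ (ball ξ (2 * ε)) := by
    intro ξ hξ
    obtain ⟨p, hp, hps⟩ := (infDist_lt_iff hne).1 hξ.1
    refine (hA p hp ε hε).1.trans ?_
    rw [hσ, Measure.restrict_apply measurableSet_ball]
    refine measure_mono ?_
    rintro q ⟨hq, hq2⟩
    have h3 := hξ.2
    rw [mem_ball] at hq2 h3
    have t1 := dist_triangle q p ξ
    have t2 := dist_triangle q ξ x
    rw [dist_comm p ξ] at t1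
    refine ⟨?_, hq, ?_⟩ <;> rw [mem_ball] <;> linarith
  have h2 : volume N * ENNReal.ofReal (C₀⁻¹ * ε ^ d) ≤ σ univ * volume (ball (0:Euc n) (2 * ε)) := by
    calc volume N * ENNReal.ofReal (C₀⁻¹ * ε ^ d) = ∫⁻ ξ in N, ENNReal.ofReal (C₀⁻¹ * ε ^ d) := by
          rw [setLIntegral_const, mul_comm]
      _ ≤ ∫⁻ ξ in N, σ (ball ξ (2 * ε)) := setLIntegral_mono' hNm h1
      _ ≤ ∫⁻ ξ, σ (ball ξ (2 * ε)) := setLIntegral_le_lintegral _ _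
      _ = ∫⁻ ξ, ∫⁻ z, (if dist ξ z < 2 * ε then 1 else 0) ∂σ := by
          refine lintegral_congr fun ξ => ?_
          rw [← lintegral_indicator_one measurableSet_ball]
          refine lintegral_congr fun z => ?_
          simp [indicator, mem_ball, dist_comm]
      _ = ∫⁻ z, ∫⁻ ξ, (if dist ξ z < 2 * ε then 1 else 0) ∂volume ∂σ := by
          rw [lintegral_lintegral_swap]
          refine (Measurable.ite (measurableSet_lt ?_ ?_) measurable_const
            measurable_const).aemeasurable
          · exact measurable_fst.dist measurable_snd
          · fun_prop
      _ = ∫⁻ z, volume (ball (0:Euc n) (2 * ε)) ∂σ := by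
          refine lintegral_congr fun z => ?_
          rw [← Measure.addHaar_ball_center volume z, ← lintegral_indicator_one measurableSet_ball]
          refine lintegral_congr fun z => ?_
          simp [indicator, mem_ball]
      _ = _ := by rw [lintegral_const, mul_comm]
  have hεd : 0 < ε ^ d := Real.rpow_pos_of_pos hε d
  calc volume N = volume N * ENNReal.ofReal (C₀⁻¹ * ε ^ d) * ENNReal.ofReal (C₀ * (ε ^ d)⁻¹) := by
        rw [mul_assoc, ← ENNReal.ofReal_mul (by positivity)]
        have : C₀⁻¹ * ε ^ d * (C₀ * (ε ^ d)⁻¹) = 1 := by field_simp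
        rw [this]; simp
    _ ≤ σ univ * volume (ball (0:Euc n) (2 * ε)) * ENNReal.ofReal (C₀ * (ε ^ d)⁻¹) := by gcongr
    _ = _ := by
        rw [vol_ball n 0 (by positivity : 0 < 2 * ε)]
        have : ENNReal.ofReal (2 ^ n * C₀) * ENNReal.ofReal (ε ^ ((n:ℝ) - d)) =
            ENNReal.ofReal ((2 * ε) ^ n) * ENNReal.ofReal (C₀ * (ε ^ d)⁻¹) := by
          rw [← ENNReal.ofReal_mul (by positivity), ← ENNReal.ofReal_mul (by positivity)]
          congr 1
          rw [Real.rpow_sub hε, Real.rpow_natCast, mul_pow]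
          field_simp
        rw [mul_assoc _ _ (ENNReal.ofReal (ε ^ ((n:ℝ) - d))), this]
        ring

lemma measW_ball {n : ℕ} {d C₀ : ℝ} {Γ : Set (Euc n)} (hA : AhlforsRegular n d C₀ Γ)
    (hne : Γ.Nonempty) (hdn : d < (n : ℝ) - 1) (hC₀ : 1 ≤ C₀) (hm : MeasurableSet Γ) {x : Euc n}
    (hx : x ∈ Γ) {r : ℝ} (hr : 0 < r) : measW n d Γ (ball x r) < ⊤ := by
  obtain ⟨K, hK, hKv⟩ := nbhd_vol hA hne hC₀ hm hx hr (by positivity : 0 < 4 * r)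
  set R := 4 * r with hR
  have hRpos : 0 < R := by positivity
  rw [measW, withDensity_apply _ measurableSet_ball]
  set k := ENNReal.ofReal (R ^ (d + 1 - (n:ℝ)) * 2 ^ ((n:ℝ) - d)) with hk
  have hpt : ∀ ξ ∈ ball x r, ENNReal.ofReal (weightW n d Γ ξ) ≤
      k * ∫⁻ t in Ioo (0:ℝ) 1, (if infDist ξ Γ < t * R then ENNReal.ofReal (t ^ (d - (n:ℝ))) else 0)
      := by
    intro ξ hξ
    have hδr : infDist ξ Γ < r := (infDist_le_dist_of_mem hx).trans_lt hξ
    rcases (infDist_nonneg (x := ξ) (s := Γ)).eq_or_lt with h0 | h0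
    · rw [weightW, ← h0, Real.zero_rpow (by linarith)]; simp
    set δ := infDist ξ Γ with hδ
    set a := δ / R with ha
    have ha0 : 0 < a := by positivity
    have haR : δ = a * R := by rw [ha]; field_simp
    have hsub : Ioo a (2 * a) ⊆ Ioo (0:ℝ) 1 := by
      intro t ht
      refine ⟨ha0.trans ht.1, ht.2.trans ?_⟩
      rw [ha, ← mul_div_assoc, div_lt_one hRpos]; linarith
    have hl : ENNReal.ofReal ((2 * a) ^ (d - (n:ℝ)) * a) ≤ ∫⁻ t in Ioo (0:ℝ) 1,
        (if δ < t * R then ENNReal.ofReal (t ^ (d - (n:ℝ))) else 0) := by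
      calc _ = ∫⁻ t in Ioo a (2 * a), ENNReal.ofReal ((2 * a) ^ (d - (n:ℝ))) := by
            rw [setLIntegral_const, Real.volume_Ioo, ← ENNReal.ofReal_mul (by positivity)]
            congr 2; ring
        _ ≤ ∫⁻ t in Ioo a (2 * a), (if δ < t * R then ENNReal.ofReal (t ^ (d - (n:ℝ))) else 0) := by
            refine setLIntegral_mono' measurableSet_Ioo fun t ht => ?_
            have : δ < t * R := by rw [haR]; exact mul_lt_mul_of_pos_right ht.1 hRpos
            rw [if_pos this]
            refine ENNReal.ofReal_le_ofReal ?_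
            exact Real.rpow_le_rpow_of_nonpos (ha0.trans ht.1) ht.2.le (by linarith)
        _ ≤ _ := lintegral_mono_set hsub
    refine le_trans (le_of_eq ?_) (mul_le_mul_right hl k)
    rw [hk, ← ENNReal.ofReal_mul (by positivity), weightW, ← hδ]
    congr 1
    rw [haR, Real.mul_rpow ha0.le hRpos.le, Real.mul_rpow (by norm_num) ha0.le]
    have e1 : a ^ (d + 1 - (n:ℝ)) = a ^ (d - (n:ℝ)) * a := by
      rw [← Real.rpow_add_one ha0.ne']; congr 1; ring
    have e2 : (2:ℝ) ^ ((n:ℝ) - d) * 2 ^ (d - (n:ℝ)) = 1 := by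
      rw [← Real.rpow_add (by norm_num)]; simp
    rw [e1]
    linear_combination (-(a ^ (d - (n:ℝ)) * a * R ^ (d + 1 - (n:ℝ)))) * e2
  refine (setLIntegral_mono' measurableSet_ball hpt).trans_lt ?_
  have hmeas : Measurable (fun p : Euc n × ℝ =>
      if infDist p.1 Γ < p.2 * R then ENNReal.ofReal (p.2 ^ (d - (n:ℝ))) else 0) := by
    refine Measurable.ite (measurableSet_lt ?_ ?_) ?_ measurable_const
    · exact (continuous_infDist_pt Γ).measurable.comp measurable_fst
    · fun_prop
    · fun_prop
  rw [lintegral_const_mul _ hmeas.lintegral_prod_right', lintegral_lintegral_swap hmeas.aemeasurable]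
  refine ENNReal.mul_lt_top ENNReal.ofReal_lt_top ?_
  have hb : ∀ t ∈ Ioo (0:ℝ) 1, ∫⁻ ξ in ball x r,
      (if infDist ξ Γ < t * R then ENNReal.ofReal (t ^ (d - (n:ℝ))) else 0) ≤
        K * ENNReal.ofReal (R ^ ((n:ℝ) - d)) := by
    intro t ht
    have ht0 := ht.1
    have hS : MeasurableSet {ξ : Euc n | infDist ξ Γ < t * R} :=
      measurableSet_lt (continuous_infDist_pt Γ).measurable measurable_const
    have : ∫⁻ ξ in ball x r,
      (if infDist ξ Γ < t * R then ENNReal.ofReal (t ^ (d - (n:ℝ))) else 0) =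
        ENNReal.ofReal (t ^ (d - (n:ℝ))) * volume ({ξ | infDist ξ Γ < t * R} ∩ ball x r) := by
      rw [← Measure.restrict_apply hS, ← lintegral_indicator_const hS]
      rfl
    rw [this]
    refine (mul_le_mul_right (hKv (t * R) (by positivity) (by nlinarith [ht.2])) _).trans
      (le_of_eq ?_)
    rw [mul_left_comm, ← ENNReal.ofReal_mul (by positivity), Real.mul_rpow ht0.le hRpos.le,
      ← mul_assoc, ← Real.rpow_add ht0]
    simp
  refine (setLIntegral_mono' measurableSet_Ioo hb).trans_lt ?_
  rw [setLIntegral_const]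
  exact ENNReal.mul_lt_top (ENNReal.mul_lt_top hK.lt_top ENNReal.ofReal_lt_top) (by simp)

lemma segI_hit {n : ℕ} {Γ : Set (Euc n)} {x z y : Euc n} {r ε : ℝ} (hr : 0 < r) (hε : 0 < ε)
    (hεr : ε ≤ 2 * r) (hz : z ∈ ball x r) (hy : y ∈ ball x r)
    (hit : ∃ t ∈ Icc (0:ℝ) 1, z + t • (y - z) ∈ Γ) :
    ENNReal.ofReal (ε / (2 * r)) ≤
      segI (({ξ | infDist ξ Γ < ε} ∩ ball x r).indicator fun _ => 1) z y := by
  obtain ⟨t₀, ht₀, hΓ⟩ := hit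
  set q := ε / (2 * r) with hq
  have hq0 : 0 < q := by positivity
  have hq1 : q ≤ 1 := by rw [hq, div_le_one (by positivity)]; exact hεr
  have hqε : q * (2 * r) = ε := by rw [hq]; field_simp
  set a := max 0 (t₀ - q) with ha
  have ha0 : 0 ≤ a := le_max_left _ _
  have ha1 : t₀ - q ≤ a := le_max_right _ _
  have ha2 : a + q ≤ 1 ∧ a ≤ t₀ := by
    rcases max_cases 0 (t₀ - q) with h | h
    · exact ⟨by rw [ha, h.1]; linarith, by rw [ha, h.1]; exact ht₀.1⟩
    · exact ⟨by rw [ha, h.1]; linarith [ht₀.2], by rw [ha, h.1]; linarith⟩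
  have hyz : dist y z < 2 * r := by
    rw [mem_ball] at hz hy
    have := dist_triangle_right y z x
    linarith
  unfold segI
  calc ENNReal.ofReal q = ∫⁻ t in Ioo a (a + q), (1 : ℝ≥0∞) := by simp
    _ ≤ ∫⁻ t in Ioo a (a + q), (({ξ | infDist ξ Γ < ε} ∩ ball x r).indicator fun _ => 1)
          (z + t • (y - z)) := by
        refine setLIntegral_mono' measurableSet_Ioo fun t ht => ?_
        rw [indicator_of_mem]
        refine ⟨?_, ?_⟩
        · refine (infDist_le_dist_of_mem hΓ).trans_lt ?_
          rw [dist_eq_norm, show z + t • (y - z) - (z + t₀ • (y - z)) = (t - t₀) • (y - z) by module,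
            norm_smul, ← hqε]
          have h2 : ‖t - t₀‖ ≤ q := by
            rw [Real.norm_eq_abs, abs_le]
            constructor
            · linarith [ht.1]
            · linarith [ht.2, ha2.2]
          rw [dist_eq_norm] at hyz
          calc ‖t - t₀‖ * ‖y - z‖ ≤ q * ‖y - z‖ := by gcongr
            _ < q * (2 * r) := by gcongr
        · have hc := convex_ball x r
          have htI : t ∈ Icc (0:ℝ) 1 := ⟨by linarith [ht.1], by linarith [ht.2, ha2.1]⟩
          exact hc.add_smul_sub_mem hz hy htI
    _ ≤ _ := lintegral_mono_set (Ioo_subset_Ioo ha0 ha2.1)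

lemma ae_seg {n : ℕ} {d C₀ : ℝ} {Γ : Set (Euc n)} (hA : AhlforsRegular n d C₀ Γ)
    (hne : Γ.Nonempty) (hdn : d < (n : ℝ) - 1) (hC₀ : 1 ≤ C₀) (hm : MeasurableSet Γ) {x : Euc n}
    (hx : x ∈ Γ) {r : ℝ} (hr : 0 < r) :
    ∀ᵐ p ∂((volume.restrict (ball x r)).prod (volume.restrict (ball x r))),
      ∀ t ∈ Icc (0:ℝ) 1, p.1 + t • (p.2 - p.1) ∈ ball x r \ Γ := by
  obtain ⟨K, hK, hKv⟩ := nbhd_vol hA hne hC₀ hm hx hr (by positivity : 0 < 2 * r)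
  set B := ball x r with hB
  set μ := (volume.restrict B).prod (volume.restrict B) with hμ
  have hmemB : ∀ᵐ p ∂μ, p ∈ B ×ˢ B := by
    rw [hμ, Measure.prod_restrict]
    exact ae_restrict_mem (measurableSet_ball.prod measurableSet_ball)
  set H : Set (Euc n × Euc n) := {p | p.1 ∈ B ∧ p.2 ∈ B ∧ ∃ t ∈ Icc (0:ℝ) 1, p.1 + t • (p.2 - p.1) ∈ Γ}
    with hH
  have hbound : ∀ ε, 0 < ε → ε ≤ 2 * r → μ H ≤
      K * volume (ball (0:Euc n) (2 * r)) * ENNReal.ofReal (2 * r * ε ^ ((n:ℝ) - d - 1)) := by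
    intro ε hε hεr
    set N := {ξ | infDist ξ Γ < ε} ∩ ball x r with hN
    have hNm : MeasurableSet N :=
      (measurableSet_lt (continuous_infDist_pt Γ).measurable measurable_const).inter
        measurableSet_ball
    have hgm : Measurable (N.indicator fun _ => (1:ℝ≥0∞)) := measurable_const.indicator hNm
    have h1 : ENNReal.ofReal (ε / (2 * r)) * μ H ≤
        ∫⁻ p, segI (N.indicator fun _ => 1) p.1 p.2 ∂μ := by
      refine le_trans ?_ (mul_meas_ge_le_lintegral (measurable_segI hgm)
        (ENNReal.ofReal (ε / (2 * r))))
      refine mul_le_mul_right (measure_mono ?_) _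
      rintro p ⟨h1, h2, h3⟩
      exact segI_hit hr hε hεr h1 h2 h3
    have h2 : ∫⁻ p, segI (N.indicator fun _ => 1) p.1 p.2 ∂μ ≤
        volume N * volume (ball (0:Euc n) (2 * r)) := by
      rw [hμ, lintegral_prod _ (measurable_segI hgm).aemeasurable]
      refine (segI_double hgm B B measurableSet_ball (2 * r) ?_).trans ?_
      · intro z hz y hy
        rw [hB, mem_ball] at hz hy
        rw [mem_ball]
        have := dist_triangle_right y z x
        linarith
      · calc _ ≤ ∫⁻ ξ, N.indicator (fun _ => 1) ξ * volume (ball (0:Euc n) (2 * r)) := by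
              refine lintegral_mono fun ξ => ?_
              refine mul_le_mul_right ?_ _
              rw [← lintegral_kk_vol n (2 * r) (by positivity) ξ]
              exact setLIntegral_le_lintegral _ _
          _ = _ := by
              rw [lintegral_mul_const _ hgm, lintegral_indicator_const hNm, one_mul]
    have h3 := hKv ε hε hεr
    calc μ H = ENNReal.ofReal (2 * r / ε) * (ENNReal.ofReal (ε / (2 * r)) * μ H) := by
          rw [← mul_assoc, ← ENNReal.ofReal_mul (by positivity)]
          have : 2 * r / ε * (ε / (2 * r)) = 1 := by field_simp
          rw [this]; simp
      _ ≤ ENNReal.ofReal (2 * r / ε) * (K * ENNReal.ofReal (ε ^ ((n:ℝ) - d)) *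
            volume (ball (0:Euc n) (2 * r))) := by
          refine mul_le_mul_right (h1.trans (h2.trans ?_)) _
          gcongr
      _ = K * volume (ball (0:Euc n) (2 * r)) *
            (ENNReal.ofReal (2 * r / ε) * ENNReal.ofReal (ε ^ ((n:ℝ) - d))) := by ring
      _ = _ := by
          rw [← ENNReal.ofReal_mul (by positivity)]
          congr 2
          rw [Real.rpow_sub_one hε.ne']
          field_simp
  have hzero : μ H = 0 := by
    have hlim : Tendsto (fun ε : ℝ => K * volume (ball (0:Euc n) (2 * r)) *
        ENNReal.ofReal (2 * r * ε ^ ((n:ℝ) - d - 1))) (𝓝[>] 0) (𝓝 0) := by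
      have hc : Tendsto (fun ε : ℝ => 2 * r * ε ^ ((n:ℝ) - d - 1)) (𝓝[>] 0) (𝓝 0) := by
        have h0 : ContinuousAt (fun ε : ℝ => 2 * r * ε ^ ((n:ℝ) - d - 1)) 0 :=
          continuousAt_const.mul (Real.continuousAt_rpow_const _ _ (Or.inr (by linarith)))
        have h1 := h0.tendsto
        rw [Real.zero_rpow (by linarith), mul_zero] at h1
        exact h1.mono_left nhdsWithin_le_nhds
      have := ENNReal.Tendsto.const_mul (a := K * volume (ball (0:Euc n) (2 * r)))
        (ENNReal.tendsto_ofReal hc)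
        (Or.inr (ENNReal.mul_ne_top hK measure_ball_lt_top.ne))
      simpa using this
    refine le_antisymm (ge_of_tendsto hlim ?_) zero_le
    filter_upwards [Ioc_mem_nhdsGT (by positivity : 0 < 2 * r)] with ε hε
    exact hbound ε hε.1 hε.2
  have hnot : ∀ᵐ p ∂μ, p ∉ H := measure_eq_zero_iff_ae_notMem.1 hzero
  filter_upwards [hmemB, hnot] with p hp hpH t ht
  refine ⟨?_, fun hc => hpH ⟨hp.1, hp.2, t, ht, hc⟩⟩
  exact (convex_ball x r).add_smul_sub_mem hp.1 hp.2 ht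

open scoped Convolution in
/-- Mollification. -/
def moll {n : ℕ} (φ : ContDiffBump (0 : Euc n)) (u : Euc n → ℝ) : Euc n → ℝ :=
  (u ⋆[ContinuousLinearMap.lsmul ℝ ℝ, volume] (φ.normed volume))

/-- Mollification of a nonnegative function. -/
def mollE {n : ℕ} (φ : ContDiffBump (0 : Euc n)) (g : Euc n → ℝ≥0∞) (ξ : Euc n) : ℝ≥0∞ :=
  ∫⁻ h, ENNReal.ofReal (φ.normed volume (ξ - h)) * g h

/-- `g` controls the distributional gradient of `u` on `U`. -/
def GradBd {n : ℕ} (u : Euc n → ℝ) (g : Euc n → ℝ≥0∞) (U : Set (Euc n)) : Prop :=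
  ∀ ψ : Euc n → ℝ, ContDiff ℝ (⊤ : ℕ∞) ψ → HasCompactSupport ψ → tsupport ψ ⊆ U →
    (∀ x, 0 ≤ ψ x) → ‖∫ x, u x • gradient ψ x‖ₑ ≤ ∫⁻ x, ENNReal.ofReal (ψ x) * g x

lemma moll_contDiff {n : ℕ} (φ : ContDiffBump (0 : Euc n)) {u : Euc n → ℝ}
    (hu : LocallyIntegrable u volume) : ContDiff ℝ 1 (moll φ u) := by
  have := φ.hasCompactSupport_normed (μ := volume).contDiff_convolution_right (n := 1)
    (ContinuousLinearMap.lsmul ℝ ℝ) hu φ.contDiff_normed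
  exact_mod_cast this

lemma moll_fderiv {n : ℕ} (φ : ContDiffBump (0 : Euc n)) {u : Euc n → ℝ} {g : Euc n → ℝ≥0∞}
    {U : Set (Euc n)} (hu : LocallyIntegrable u volume) (hG : GradBd u g U) (ξ w : Euc n)
    (hξ : closedBall ξ φ.rOut ⊆ U) :
    ‖fderiv ℝ (moll φ u) ξ w‖ₑ ≤ ‖w‖ₑ * mollE φ g ξ := by
  set f := φ.normed (volume : Measure (Euc n)) with hf
  have hfc : HasCompactSupport f := φ.hasCompactSupport_normed
  have hf1 : ContDiff ℝ (⊤ : ℕ∞) f := φ.contDiff_normed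
  have hf1' : ContDiff ℝ 1 f := hf1.of_le (by exact_mod_cast le_top)
  set ψ : Euc n → ℝ := fun t => f (ξ - t) with hψ
  have hψ1 : ContDiff ℝ (⊤ : ℕ∞) ψ := hf1.comp (contDiff_const.sub contDiff_id)
  have hψc : HasCompactSupport ψ := hfc.comp_homeomorph (Homeomorph.subLeft ξ)
  have hψs : tsupport ψ ⊆ U := by
    refine Subset.trans ?_ hξ
    refine closure_minimal ?_ isClosed_closedBall
    intro t ht
    have : ξ - t ∈ Function.support f := ht
    rw [hf, φ.support_normed_eq, mem_ball_zero_iff] at this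
    rw [mem_closedBall, dist_comm, dist_eq_norm]
    exact this.le
  have hgradψ : ∀ t, inner ℝ (gradient ψ t) w = - (fderiv ℝ f (ξ - t) w) := by
    intro t
    rw [inner_gradient_left]
    have h1 : HasFDerivAt ψ ((fderiv ℝ f (ξ - t)).comp (-ContinuousLinearMap.id ℝ (Euc n))) t := by
      have h2 : HasFDerivAt f (fderiv ℝ f (ξ - t)) (ξ - t) :=
        (hf1'.differentiable one_ne_zero).differentiableAt.hasFDerivAt
      exact h2.comp t ((hasFDerivAt_id t).const_sub ξ)
    rw [h1.fderiv]
    simp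
  have hgc : Continuous (gradient ψ) := by
    unfold gradient
    exact (LinearIsometryEquiv.continuous _).comp (hψ1.continuous_fderiv (by simp))
  have hgs : HasCompactSupport (gradient ψ) := by
    have := hψc.fderiv ℝ
    unfold gradient
    exact this.comp_left (by simp)
  have hint : Integrable (fun t => u t • gradient ψ t) volume :=
    hu.integrable_smul_right_of_hasCompactSupport hgc hgs
  have hD : fderiv ℝ (moll φ u) ξ w = - inner ℝ (∫ t, u t • gradient ψ t) w := by
    have h1 := hfc.hasFDerivAt_convolution_right (ContinuousLinearMap.lsmul ℝ ℝ) hu hf1' ξ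
    have h2 : fderiv ℝ (moll φ u) ξ = _ := h1.fderiv
    rw [h2, convolution_precompR_apply _ hu (hfc.fderiv ℝ) (hf1'.continuous_fderiv one_ne_zero)]
    rw [convolution_lsmul, real_inner_comm, ← integral_inner hint, ← integral_neg]
    refine integral_congr_ae (Eventually.of_forall fun t => ?_)
    simp only
    rw [real_inner_comm, real_inner_smul_left, hgradψ t]
    simp
  rw [hD, enorm_neg]
  have h3 := hG ψ hψ1 hψc hψs (fun t => φ.nonneg_normed _)
  calc ‖inner ℝ (∫ t, u t • gradient ψ t) w‖ₑ ≤ ‖∫ t, u t • gradient ψ t‖ₑ * ‖w‖ₑ := by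
        rw [← ofReal_norm, ← ofReal_norm, ← ofReal_norm,
          ← ENNReal.ofReal_mul (norm_nonneg _)]
        exact ENNReal.ofReal_le_ofReal (norm_inner_le_norm _ _)
    _ ≤ _ := by
        rw [mul_comm]
        gcongr
        exact h3

lemma moll_seg {n : ℕ} (φ : ContDiffBump (0 : Euc n)) {u : Euc n → ℝ} {g : Euc n → ℝ≥0∞}
    {U : Set (Euc n)} (hu : LocallyIntegrable u volume) (hG : GradBd u g U) (z y : Euc n)
    (hseg : ∀ t ∈ Icc (0:ℝ) 1, closedBall (z + t • (y - z)) φ.rOut ⊆ U) :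
    ‖moll φ u y - moll φ u z‖ₑ ≤ ‖y - z‖ₑ * segI (mollE φ g) z y := by
  have hc := moll_contDiff φ hu
  have hd : ∀ t : ℝ, HasDerivAt (fun t : ℝ => moll φ u (z + t • (y - z)))
      (fderiv ℝ (moll φ u) (z + t • (y - z)) (y - z)) t := by
    intro t
    have h1 : HasDerivAt (fun t : ℝ => z + t • (y - z)) (y - z) t := by
      have := ((hasDerivAt_id t).smul_const (y - z)).const_add z
      simpa using this
    exact ((hc.differentiable one_ne_zero).differentiableAt.hasFDerivAt).comp_hasDerivAt t h1
  have hcont : Continuous fun t : ℝ => fderiv ℝ (moll φ u) (z + t • (y - z)) (y - z) := by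
    have := hc.continuous_fderiv one_ne_zero
    fun_prop
  have hftc := intervalIntegral.integral_eq_sub_of_hasDerivAt (a := 0) (b := 1)
    (fun t _ => hd t) (hcont.intervalIntegrable _ _)
  have e : moll φ u y - moll φ u z = ∫ t in Ioo (0:ℝ) 1,
      fderiv ℝ (moll φ u) (z + t • (y - z)) (y - z) := by
    rw [← integral_Ioc_eq_integral_Ioo, ← intervalIntegral.integral_of_le zero_le_one, hftc]
    simp
  rw [e]
  refine (enorm_integral_le_lintegral_enorm _).trans ?_
  unfold segI
  rw [← lintegral_const_mul' _ _ enorm_ne_top]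
  refine setLIntegral_mono' measurableSet_Ioo fun t ht => ?_
  exact moll_fderiv φ hu hG _ _ (hseg t (Ioo_subset_Icc_self ht))

lemma measurable_mollE {n : ℕ} (φ : ContDiffBump (0 : Euc n)) {g : Euc n → ℝ≥0∞}
    (hg : Measurable g) : Measurable (mollE φ g) := by
  unfold mollE
  have hm : Measurable (fun p : Euc n × Euc n => φ.normed volume (p.1 - p.2)) := by
    have h1 : Measurable (φ.normed (volume : Measure (Euc n))) := φ.continuous_normed.measurable
    exact h1.comp (by fun_prop)
  have h2 : Measurable (fun p : Euc n × Euc n =>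
      ENNReal.ofReal (φ.normed volume (p.1 - p.2)) * g p.2) :=
    hm.ennreal_ofReal.mul (hg.comp measurable_snd)
  exact h2.lintegral_prod_right'

lemma mollE_double {n : ℕ} (φ : ContDiffBump (0 : Euc n)) {g : Euc n → ℝ≥0∞}
    (hg : Measurable g) (z : Euc n) (B : Set (Euc n)) {R ρ : ℝ} (hρ : 0 < ρ) (hR : 4 * ρ ≤ R)
    (hφ : φ.rOut ≤ ρ) (hAB : ∀ z' ∈ ball z ρ, B ⊆ ball z' R) :
    ∫⁻ z' in ball z ρ, ∫⁻ y in B, segI (mollE φ g) z' y ≤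
      (1 + 2 ^ n) * volume (ball z (2 * ρ)) * ∫⁻ ξ, g ξ * kk n (2 * R) ξ z := by
  refine (segI_double (measurable_mollE φ hg) _ B measurableSet_ball R hAB).trans ?_
  set f := φ.normed (volume : Measure (Euc n)) with hf
  have hfm : Measurable f := φ.continuous_normed.measurable
  have key : ∀ ξ h : Euc n, ENNReal.ofReal (f (ξ - h)) * ∫⁻ z' in ball z ρ, kk n R ξ z' ≤
      ENNReal.ofReal (f (ξ - h)) * ∫⁻ z' in ball z (2 * ρ), kk n R h z' := by
    intro ξ h
    by_cases hc : ξ - h ∈ Function.support f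
    · refine mul_le_mul_right ?_ _
      rw [hf, φ.support_normed_eq, mem_ball_zero_iff] at hc
      rw [lintegral_kk, lintegral_kk]
      refine lintegral_mono fun t => ?_
      refine mul_le_mul_right ?_ _
      rw [Measure.restrict_apply measurableSet_ball, Measure.restrict_apply measurableSet_ball,
        ← measure_preimage_add volume (ξ - h) (ball ξ (t * R) ∩ ball z ρ)]
      refine measure_mono ?_
      rintro q ⟨h1, h2⟩
      rw [mem_ball, dist_eq_norm] at h1 h2
      change ‖ξ - h + q - ξ‖ < _ at h1
      change ‖ξ - h + q - z‖ < _ at h2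
      refine ⟨?_, ?_⟩
      · rw [mem_ball, dist_eq_norm]
        have : q - h = ξ - h + q - ξ := by abel
        rw [this]; exact h1
      · rw [mem_ball, dist_eq_norm]
        have : q - z = (ξ - h + q - z) - (ξ - h) := by abel
        rw [this]
        have := norm_sub_le (ξ - h + q - z) (ξ - h)
        linarith
    · rw [Function.notMem_support.1 hc]; simp
  have hΦm : Measurable fun ξ => ∫⁻ z' in ball z ρ, kk n R ξ z' :=
    (measurable_kk n R).lintegral_prod_right'
  have hint : ∀ h : Euc n, ∫⁻ ξ, ENNReal.ofReal (f (ξ - h)) = 1 := by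
    intro h
    rw [lintegral_sub_right_eq_self (fun ξ => ENNReal.ofReal (f ξ)) h,
      ← ofReal_integral_eq_lintegral_ofReal φ.integrable_normed
        (Eventually.of_forall φ.nonneg_normed), φ.integral_normed, ENNReal.ofReal_one]
  have hm : Measurable (fun p : Euc n × Euc n => ENNReal.ofReal (f (p.1 - p.2))) :=
    (hfm.comp (by fun_prop : Measurable fun p : Euc n × Euc n => p.1 - p.2)).ennreal_ofReal
  calc ∫⁻ ξ, mollE φ g ξ * ∫⁻ z' in ball z ρ, kk n R ξ z'
      = ∫⁻ ξ, ∫⁻ h, ENNReal.ofReal (f (ξ - h)) * g h * ∫⁻ z' in ball z ρ, kk n R ξ z' := by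
        refine lintegral_congr fun ξ => ?_
        rw [lintegral_mul_const]
        · rfl
        · exact (hfm.comp (by fun_prop : Measurable fun h : Euc n => ξ - h)).ennreal_ofReal.mul hg
    _ = ∫⁻ h, ∫⁻ ξ, ENNReal.ofReal (f (ξ - h)) * g h * ∫⁻ z' in ball z ρ, kk n R ξ z' := by
        rw [lintegral_lintegral_swap]
        exact ((hm.mul (hg.comp measurable_snd)).mul (hΦm.comp measurable_fst)).aemeasurable
    _ ≤ ∫⁻ h, ∫⁻ ξ, ENNReal.ofReal (f (ξ - h)) *
          (g h * ∫⁻ z' in ball z (2 * ρ), kk n R h z') := by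
        refine lintegral_mono fun h => lintegral_mono fun ξ => ?_
        have := mul_le_mul_right (key ξ h) (g h)
        calc _ = g h * (ENNReal.ofReal (f (ξ - h)) * ∫⁻ z' in ball z ρ, kk n R ξ z') := by ring
          _ ≤ _ := this
          _ = _ := by ring
    _ = ∫⁻ h, g h * ∫⁻ z' in ball z (2 * ρ), kk n R h z' := by
        refine lintegral_congr fun h => ?_
        rw [lintegral_mul_const, hint h, one_mul]
        exact (hfm.comp (by fun_prop : Measurable fun ξ : Euc n => ξ - h)).ennreal_ofReal
    _ ≤ ∫⁻ h, (1 + 2 ^ n) * volume (ball z (2 * ρ)) * (g h * kk n (2 * R) h z) := by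
        refine lintegral_mono fun h => ?_
        have := mul_le_mul_right (kk_avg n (by positivity : 0 < 2 * ρ) (by linarith) h z (R := R)) (g h)
        refine this.trans (le_of_eq ?_)
        ring
    _ = _ := by
        rw [lintegral_const_mul]
        exact hg.mul (measurable_kk_left n (2 * R) z)

lemma moll_eq {n : ℕ} (φ : ContDiffBump (0 : Euc n)) (u : Euc n → ℝ) (x : Euc n) :
    moll φ u x = MeasureTheory.convolution (φ.normed volume) u
      (ContinuousLinearMap.lsmul ℝ ℝ) volume x := by
  unfold moll
  rw [convolution_lsmul_swap, convolution_lsmul]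
  refine integral_congr_ae (Eventually.of_forall fun t => ?_)
  simp [mul_comm]

/-- A sequence of bumps. -/
def bmp (n : ℕ) (j : ℕ) : ContDiffBump (0 : Euc n) where
  rIn := 1 / ((j : ℝ) + 1)
  rOut := 2 * (1 / ((j : ℝ) + 1))
  rIn_pos := by positivity
  rIn_lt_rOut := by
    have : 0 < 1 / ((j : ℝ) + 1) := by positivity
    linarith

lemma bmp_tendsto (n : ℕ) : Tendsto (fun j => (bmp n j).rOut) atTop (𝓝 0) := by
  have := (tendsto_one_div_add_atTop_nhds_zero_nat (𝕜 := ℝ)).const_mul 2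
  simpa [bmp] using this

lemma moll_ae {n : ℕ} {u : Euc n → ℝ} (hu : LocallyIntegrable u volume) :
    ∀ᵐ x, Tendsto (fun j => moll (bmp n j) u x) atTop (𝓝 (u x)) := by
  have := ContDiffBump.ae_convolution_tendsto_right_of_locallyIntegrable (K := 2)
    (μ := (volume : Measure (Euc n))) (bmp_tendsto n)
    (Eventually.of_forall fun j => by simp [bmp]) hu
  filter_upwards [this] with x hx
  refine hx.congr fun j => ?_
  rw [moll_eq]

lemma lemH {n : ℕ} {u : Euc n → ℝ} {g : Euc n → ℝ≥0∞} {Γ : Set (Euc n)} {x : Euc n} {r : ℝ}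
    (hr : 0 < r) (hΓ : IsClosed Γ)
    (hu : LocallyIntegrable u volume) (hg : Measurable g) (hG : GradBd u g (ball x r \ Γ))
    (hs : ∀ᵐ p ∂((volume.restrict (ball x r)).prod (volume.restrict (ball x r))),
      ∀ t ∈ Icc (0:ℝ) 1, p.1 + t • (p.2 - p.1) ∈ ball x r \ Γ)
    {z : Euc n} {ρ : ℝ} (hρ : 0 < ρ) (hρr : 2 * ρ ≤ r) (hz : ball z ρ ⊆ ball x r) :
    ∫⁻ z' in ball z ρ, ∫⁻ y in ball x r, ‖u y - u z'‖ₑ ≤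
      ENNReal.ofReal (2 * r) * ((1 + 2 ^ n) * volume (ball z (2 * ρ)) *
        ∫⁻ ξ, g ξ * kk n (2 * (2 * r)) ξ z) := by
  set μ := (volume.restrict (ball z ρ)).prod (volume.restrict (ball x r)) with hμ
  have hμle : μ ≪ (volume.restrict (ball x r)).prod (volume.restrict (ball x r)) :=
    Measure.AbsolutelyContinuous.prod
      (Measure.absolutelyContinuous_of_le (Measure.restrict_mono hz le_rfl))
      Measure.AbsolutelyContinuous.rfl
  have hs' := hμle hs
  have hm1 : ∀ᵐ p ∂μ, Tendsto (fun j => moll (bmp n j) u p.1) atTop (𝓝 (u p.1)) :=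
    (Measure.quasiMeasurePreserving_fst (μ := volume.restrict (ball z ρ))
      (ν := volume.restrict (ball x r))).ae (ae_restrict_of_ae (moll_ae hu))
  have hm2 : ∀ᵐ p ∂μ, Tendsto (fun j => moll (bmp n j) u p.2) atTop (𝓝 (u p.2)) :=
    (Measure.quasiMeasurePreserving_snd (μ := volume.restrict (ball z ρ))
      (ν := volume.restrict (ball x r))).ae (ae_restrict_of_ae (moll_ae hu))
  have hmem : ∀ᵐ p ∂μ, p ∈ ball x r ×ˢ ball x r := by
    have : ∀ᵐ p ∂μ, p ∈ ball z ρ ×ˢ ball x r := by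
      rw [hμ, Measure.prod_restrict]
      exact ae_restrict_mem (measurableSet_ball.prod measurableSet_ball)
    filter_upwards [this] with p hp
    exact ⟨hz hp.1, hp.2⟩
  have hUo : IsOpen (ball x r \ Γ) := isOpen_ball.sdiff hΓ
  have hpt : ∀ᵐ p ∂μ, ‖u p.2 - u p.1‖ₑ ≤
      liminf (fun j => ENNReal.ofReal (2 * r) * segI (mollE (bmp n j) g) p.1 p.2) atTop := by
    filter_upwards [hs', hm1, hm2, hmem] with p h1 h2 h3 h4
    have hlim : Tendsto (fun j => ‖moll (bmp n j) u p.2 - moll (bmp n j) u p.1‖ₑ) atTop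
        (𝓝 ‖u p.2 - u p.1‖ₑ) := (h3.sub h2).enorm
    rw [← hlim.liminf_eq]
    have hcpt : IsCompact ((fun t : ℝ => p.1 + t • (p.2 - p.1)) '' Icc 0 1) :=
      isCompact_Icc.image (by fun_prop)
    obtain ⟨δ, hδ, hδU⟩ := hcpt.exists_cthickening_subset_open hUo
      (by rintro _ ⟨t, ht, rfl⟩; exact h1 t ht)
    refine liminf_le_liminf ?_
    filter_upwards [(bmp_tendsto n).eventually (ge_mem_nhds hδ)] with j hj
    refine (moll_seg (bmp n j) hu hG p.1 p.2 fun t ht => ?_).trans ?_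
    · refine Subset.trans ?_ hδU
      refine (closedBall_subset_closedBall hj).trans ?_
      exact closedBall_subset_cthickening (mem_image_of_mem (fun t : ℝ => p.1 + t • (p.2 - p.1)) ht) δ
    · gcongr
      rw [← ofReal_norm, ← dist_eq_norm]
      refine ENNReal.ofReal_le_ofReal ?_
      have a := mem_ball.1 h4.1
      have b := mem_ball.1 h4.2
      have := dist_triangle_right p.2 p.1 x
      linarith
  have hum : AEMeasurable u volume := hu.aestronglyMeasurable.aemeasurable
  have hF : AEMeasurable (fun p : Euc n × Euc n => ‖u p.2 - u p.1‖ₑ) μ := by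
    refine AEMeasurable.enorm ?_
    exact (hum.restrict.comp_snd).sub (hum.restrict.comp_fst)
  have hSm : ∀ j, Measurable fun p : Euc n × Euc n =>
      ENNReal.ofReal (2 * r) * segI (mollE (bmp n j) g) p.1 p.2 := fun j =>
    (measurable_segI (measurable_mollE (bmp n j) hg)).const_mul _
  rw [lintegral_lintegral hF]
  calc ∫⁻ p, ‖u p.2 - u p.1‖ₑ ∂μ
      ≤ ∫⁻ p, liminf (fun j => ENNReal.ofReal (2 * r) * segI (mollE (bmp n j) g) p.1 p.2) atTop ∂μ :=
        lintegral_mono_ae hpt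
    _ ≤ liminf (fun j => ∫⁻ p, ENNReal.ofReal (2 * r) * segI (mollE (bmp n j) g) p.1 p.2 ∂μ) atTop :=
        lintegral_liminf_le hSm
    _ ≤ liminf (fun _ : ℕ => ENNReal.ofReal (2 * r) * ((1 + 2 ^ n) * volume (ball z (2 * ρ)) *
        ∫⁻ ξ, g ξ * kk n (2 * (2 * r)) ξ z)) atTop := by
        refine liminf_le_liminf ?_
        filter_upwards [(bmp_tendsto n).eventually (ge_mem_nhds hρ)] with j hj
        rw [lintegral_prod _ (hSm j).aemeasurable]
        simp_rw [lintegral_const_mul' _ _ ENNReal.ofReal_ne_top]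
        refine mul_le_mul_right ?_ _
        refine mollE_double (bmp n j) hg z (ball x r) hρ (by linarith) hj ?_
        intro z' hz' y hy
        have a := mem_ball.1 (hz hz')
        have b := mem_ball.1 hy
        have := dist_triangle_right y z' x
        rw [mem_ball]; linarith
    _ = _ := by simp

lemma trace_step {n : ℕ} {u : Euc n → ℝ} {g : Euc n → ℝ≥0∞} {Γ : Set (Euc n)} {x : Euc n} {r : ℝ}
    (hr : 0 < r) (hΓ : IsClosed Γ)
    (hu : LocallyIntegrable u volume) (hg : Measurable g) (hG : GradBd u g (ball x r \ Γ))
    (hs : ∀ᵐ p ∂((volume.restrict (ball x r)).prod (volume.restrict (ball x r))),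
      ∀ t ∈ Icc (0:ℝ) 1, p.1 + t • (p.2 - p.1) ∈ ball x r \ Γ)
    {z : Euc n} (hz : z ∈ ball x r) (ht : HasTraceAt u z 0) :
    ∫⁻ y in ball x r, ‖u y‖ₑ ≤
      ENNReal.ofReal (2 * r) * ((1 + 2 ^ n) * 2 ^ n * ∫⁻ ξ, g ξ * kk n (2 * (2 * r)) ξ z) := by
  set K := ENNReal.ofReal (2 * r) * ((1 + 2 ^ n) * 2 ^ n * ∫⁻ ξ, g ξ * kk n (2 * (2 * r)) ξ z)
    with hK
  have hum : AEMeasurable u volume := hu.aestronglyMeasurable.aemeasurable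
  have hlim : Tendsto (fun ρ : ℝ => K + ‖⨍ y in ball z ρ, u y‖ₑ * volume (ball x r)) (𝓝[>] 0)
      (𝓝 (K + ‖(0:ℝ)‖ₑ * volume (ball x r))) := by
    refine tendsto_const_nhds.add ?_
    exact ENNReal.Tendsto.mul_const ht.enorm (Or.inr measure_ball_lt_top.ne)
  rw [enorm_zero, zero_mul, add_zero] at hlim
  refine ge_of_tendsto hlim ?_
  obtain ⟨ε, hε, hεB⟩ := Metric.isOpen_iff.1 isOpen_ball z hz
  have hev : ∀ᶠ ρ : ℝ in 𝓝[>] 0, ρ ∈ Ioo 0 (min ε (r / 2)) :=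
    Ioo_mem_nhdsGT (lt_min hε (by positivity))
  filter_upwards [hev] with ρ hρ
  have hρ0 : 0 < ρ := hρ.1
  have hρε : ρ < ε := hρ.2.trans_le (min_le_left _ _)
  have hρr : ρ < r / 2 := hρ.2.trans_le (min_le_right _ _)
  have hH := lemH hr hΓ hu hg hG hs hρ0 (by linarith) ((ball_subset_ball hρε.le).trans hεB)
  set a := ⨍ y in ball z ρ, u y with ha
  set V := volume (ball z ρ) with hV
  have hV0 : V ≠ 0 := (measure_ball_pos volume z hρ0).ne'
  have hVt : V ≠ ⊤ := measure_ball_lt_top.ne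
  have hV2 : volume (ball z (2 * ρ)) = 2 ^ n * V := by
    rw [hV, vol_ball n z hρ0, vol_ball n z (by positivity : 0 < 2 * ρ), mul_pow,
      ENNReal.ofReal_mul (by positivity), ENNReal.ofReal_pow (by norm_num)]
    norm_num [mul_assoc]
  have hui : IntegrableOn u (ball z ρ) volume :=
    (hu.integrableOn_isCompact (isCompact_closedBall z ρ)).mono_set ball_subset_closedBall
  have hpt : ∀ y, V * ‖u y - a‖ₑ ≤ ∫⁻ z' in ball z ρ, ‖u y - u z'‖ₑ := by
    intro y
    have e : V.toReal * (u y - a) = ∫ z' in ball z ρ, (u y - u z') := by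
      rw [integral_sub (integrableOn_const (C := u y) (by exact hVt) (by exact enorm_ne_top) : IntegrableOn (fun _ => u y) (ball z ρ) volume).integrable hui, setIntegral_const, ha, setAverage_eq]
      simp only [measureReal_def, smul_eq_mul]
      rw [← hV]
      have : V.toReal ≠ 0 := (ENNReal.toReal_pos hV0 hVt).ne'
      field_simp
    have e2 : V * ‖u y - a‖ₑ = ‖V.toReal * (u y - a)‖ₑ := by
      rw [enorm_mul, Real.enorm_of_nonneg ENNReal.toReal_nonneg, ENNReal.ofReal_toReal hVt]
    rw [e2, e]
    exact enorm_integral_le_lintegral_enorm _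
  have h1 : V * ∫⁻ y in ball x r, ‖u y - a‖ₑ ≤ V * K := by
    rw [← lintegral_const_mul' _ _ hVt]
    calc _ ≤ ∫⁻ y in ball x r, ∫⁻ z' in ball z ρ, ‖u y - u z'‖ₑ := lintegral_mono fun y => hpt y
      _ = ∫⁻ z' in ball z ρ, ∫⁻ y in ball x r, ‖u y - u z'‖ₑ := by
          refine lintegral_lintegral_swap ?_
          refine AEMeasurable.enorm ?_
          exact (hum.restrict.comp_fst).sub (hum.restrict.comp_snd)
      _ ≤ _ := hH
      _ = V * K := by rw [hV2, hK]; ring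
  have h2 : ∫⁻ y in ball x r, ‖u y - a‖ₑ ≤ K := (ENNReal.mul_le_mul_iff_right hV0 hVt).1 h1
  calc ∫⁻ y in ball x r, ‖u y‖ₑ ≤ ∫⁻ y in ball x r, (‖u y - a‖ₑ + ‖a‖ₑ) := by
        refine lintegral_mono fun y => ?_
        have := enorm_add_le (u y - a) a
        simpa using this
    _ = (∫⁻ y in ball x r, ‖u y - a‖ₑ) + ‖a‖ₑ * volume (ball x r) := by
        rw [lintegral_add_right _ measurable_const, setLIntegral_const]
    _ ≤ _ := by gcongr

lemma gradBd {n : ℕ} {u : Euc n → ℝ} {v : Euc n → Euc n} {g : Euc n → ℝ≥0∞} {Γ U : Set (Euc n)}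
    (hU : U ⊆ Γᶜ) (hΓ : MeasurableSet Γ) (hG : IsDistribGradOn u v Γᶜ)
    (hg : ∀ᵐ y ∂(volume.restrict U), ‖v y‖ₑ = g y) : GradBd u g U := by
  intro ψ h1 h2 h3 h4
  have hz : ∀ y, y ∉ U → ψ y = 0 := fun y hy => image_eq_zero_of_notMem_tsupport fun h => hy (h3 h)
  have e1 : ∫ y, u y • gradient ψ y = ∫ y in Γᶜ, u y • gradient ψ y := by
    symm
    refine setIntegral_eq_integral_of_forall_compl_eq_zero fun y hy => ?_
    have hy' : y ∉ tsupport ψ := fun h => hy (hU (h3 h))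
    have : fderiv ℝ ψ y = 0 := by
      by_contra hne
      exact hy' (support_fderiv_subset ℝ hne)
    simp [gradient, this]
  have e2 : ∫ y in Γᶜ, ψ y • v y = ∫ y in U, ψ y • v y := by
    refine (setIntegral_eq_of_subset_of_forall_sdiff_eq_zero ?_ hU ?_)
    · exact hΓ.compl
    · intro y hy
      simp [hz y hy.2]
  rw [e1, hG ψ h1 h2 (h3.trans hU), enorm_neg, e2]
  refine (enorm_integral_le_lintegral_enorm _).trans ?_
  calc ∫⁻ y in U, ‖ψ y • v y‖ₑ ≤ ∫⁻ y in U, ENNReal.ofReal (ψ y) * g y := by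
        refine lintegral_mono_ae ?_
        filter_upwards [hg] with y hy
        rw [enorm_smul, hy, Real.enorm_of_nonneg (h4 y)]
    _ ≤ _ := setLIntegral_le_lintegral _ _

lemma grad_int {n : ℕ} {d C₀ : ℝ} {Γ : Set (Euc n)} (hA : AhlforsRegular n d C₀ Γ)
    (hne : Γ.Nonempty) (hdn : d < (n : ℝ) - 1) (hC₀ : 1 ≤ C₀) (hΓ : IsClosed Γ)
    {u : Euc n → ℝ} {v : Euc n → Euc n} (hW : MemW n d Γ u v) {x : Euc n} (hx : x ∈ Γ)
    {r : ℝ} (hr : 0 < r) : IntegrableOn v (ball x r) (measW n d Γ) := by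
  have hball := measW_ball hA hne hdn hC₀ hΓ.measurableSet hx hr
  have hac : measW n d Γ ≪ volume := withDensity_absolutelyContinuous _ _
  have hzero : measW n d Γ Γ = 0 := by
    rw [measW, withDensity_apply _ hΓ.measurableSet]
    rw [setLIntegral_congr_fun (g := fun _ => 0) hΓ.measurableSet]
    · simp
    · intro y hy
      have h0 : infDist y Γ = 0 := infDist_zero_of_mem hy
      simp only [weightW, h0]
      rw [Real.zero_rpow (by linarith)]
      simp
  have hU : IntegrableOn v (ball x r \ Γ) (measW n d Γ) := by
    refine ⟨?_, ?_⟩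
    · have h1 := hW.gradLocInt.aestronglyMeasurable
      have h2 := h1.mono_ac (hac.restrict Γᶜ)
      exact h2.mono_set (fun y hy => hy.2)
    · rw [HasFiniteIntegral]
      calc ∫⁻ y in ball x r \ Γ, ‖v y‖ₑ ∂(measW n d Γ)
          ≤ ∫⁻ y in ball x r \ Γ, (1 + ENNReal.ofReal (‖v y‖ ^ 2)) ∂(measW n d Γ) := by
            refine lintegral_mono fun y => ?_
            rw [← ENNReal.ofReal_one, ← ENNReal.ofReal_add (by norm_num) (by positivity),
              ← ofReal_norm]
            refine ENNReal.ofReal_le_ofReal ?_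
            nlinarith [sq_nonneg (‖v y‖ - 1)]
        _ = measW n d Γ (ball x r \ Γ) +
            ∫⁻ y in ball x r \ Γ, ENNReal.ofReal (‖v y‖ ^ 2) ∂(measW n d Γ) := by
            rw [lintegral_add_left measurable_const, setLIntegral_const, one_mul]
        _ ≤ measW n d Γ (ball x r) + ∫⁻ y in Γᶜ, ENNReal.ofReal (‖v y‖ ^ 2) ∂(measW n d Γ) := by
            refine add_le_add (measure_mono sdiff_subset) ?_
            exact lintegral_mono_set fun y hy => hy.2
        _ < ⊤ := ENNReal.add_lt_top.2 ⟨hball, hW.l2⟩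
  have hG : IntegrableOn v Γ (measW n d Γ) := by
    rw [IntegrableOn, Measure.restrict_eq_zero.2 hzero]; exact integrable_zero_measure
  refine (hU.union hG).mono_set ?_
  intro y hy
  by_cases h : y ∈ Γ
  · exact Or.inr h
  · exact Or.inl ⟨hy, h⟩

lemma core {n : ℕ} {d C₀ : ℝ} {Γ : Set (Euc n)} (hA : AhlforsRegular n d C₀ Γ)
    (hne : Γ.Nonempty) (hdn : d < (n : ℝ) - 1) (hC₀ : 1 ≤ C₀) (hΓ : IsClosed Γ)
    {u : Euc n → ℝ} {v : Euc n → Euc n} (hW : MemW n d Γ u v) (hu : LocallyIntegrable u volume)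
    {x : Euc n} (hx : x ∈ Γ) {r : ℝ} (hr : 0 < r)
    (ht : ∀ᵐ z ∂(μH[d].restrict (Γ ∩ ball x r)), HasTraceAt u z 0) :
    (∫⁻ y in ball x r, ‖u y‖ₑ) * ENNReal.ofReal (C₀⁻¹ * r ^ d) ≤
      ENNReal.ofReal (2 * r) * ((1 + 2 ^ n) * 2 ^ n *
        (ENNReal.ofReal (C₀ * 2 ^ d / ((n : ℝ) - 1 - d) * (2 * (2 * r)) ^ ((n : ℝ) - 1)) *
          ∫⁻ y in ball x r, ‖v y‖ₑ ∂(measW n d Γ))) := by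
  have hm := hΓ.measurableSet
  set U := ball x r \ Γ with hU
  have hUm : MeasurableSet U := measurableSet_ball.diff hm
  have hUs : U ⊆ Γᶜ := fun y hy => hy.2
  have hv : AEStronglyMeasurable v (volume.restrict U) :=
    hW.gradLocInt.aestronglyMeasurable.mono_set hUs
  set g : Euc n → ℝ≥0∞ := U.indicator (fun y => ‖hv.mk v y‖ₑ) with hg
  have hgm : Measurable g := hv.stronglyMeasurable_mk.enorm.indicator hUm
  have hgv : ∀ᵐ y ∂(volume.restrict U), ‖v y‖ₑ = g y := by
    filter_upwards [hv.ae_eq_mk, ae_restrict_mem hUm] with y h1 h2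
    rw [hg, indicator_of_mem h2, ← h1]
  have hG := gradBd hUs hm hW.isGrad hgv
  have hs := ae_seg hA hne hdn hC₀ hm hx hr
  set σ : Measure (Euc n) := μH[d].restrict (Γ ∩ ball x r) with hσ
  have hAx := hA x hx r hr
  have : IsFiniteMeasure σ := ⟨by
    rw [hσ, Measure.restrict_apply_univ]
    exact hAx.2.trans_lt ENNReal.ofReal_lt_top⟩
  have hwm : Measurable fun y => ENNReal.ofReal (weightW n d Γ y) := by
    unfold weightW
    exact ((measurable_infDist).pow_const _).ennreal_ofReal
  set I := ∫⁻ y in ball x r, ‖u y‖ₑ with hI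
  set A := ENNReal.ofReal (C₀ * 2 ^ d / ((n : ℝ) - 1 - d) * (2 * (2 * r)) ^ ((n : ℝ) - 1)) with hAdef
  have hpt : ∀ᵐ z ∂σ, I ≤ ENNReal.ofReal (2 * r) * ((1 + 2 ^ n) * 2 ^ n *
      ∫⁻ ξ, g ξ * kk n (2 * (2 * r)) ξ z) := by
    filter_upwards [ht, ae_restrict_mem (hm.inter measurableSet_ball)] with z h1 h2
    exact trace_step hr hΓ hu hgm hG hs h2.2 h1
  have hkm : Measurable (fun p : Euc n × Euc n => g p.2 * kk n (2 * (2 * r)) p.2 p.1) := by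
    have h1 : Measurable (fun p : Euc n × Euc n => kk n (2 * (2 * r)) p.1 p.2) :=
      measurable_kk n (2 * (2 * r))
    have h2 := h1.comp measurable_swap
    exact (hgm.comp measurable_snd).mul h2
  calc I * ENNReal.ofReal (C₀⁻¹ * r ^ d) ≤ I * σ univ := by
        refine mul_le_mul_right ?_ _
        rw [hσ, Measure.restrict_apply_univ]
        exact hAx.1
    _ = ∫⁻ z, I ∂σ := by rw [lintegral_const]
    _ ≤ ∫⁻ z, ENNReal.ofReal (2 * r) * ((1 + 2 ^ n) * 2 ^ n *
          ∫⁻ ξ, g ξ * kk n (2 * (2 * r)) ξ z) ∂σ := lintegral_mono_ae hpt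
    _ = ENNReal.ofReal (2 * r) * ((1 + 2 ^ n) * 2 ^ n *
          ∫⁻ z, (∫⁻ ξ, g ξ * kk n (2 * (2 * r)) ξ z) ∂σ) := by
        have hcc : ((1 : ℝ≥0∞) + 2 ^ n) * 2 ^ n ≠ ⊤ := by
          exact_mod_cast ENNReal.natCast_ne_top ((1 + 2 ^ n) * 2 ^ n)
        rw [lintegral_const_mul' _ _ ENNReal.ofReal_ne_top, lintegral_const_mul' _ _ hcc]
    _ ≤ _ := by
        refine mul_le_mul_right (mul_le_mul_right ?_ _) _
        rw [lintegral_lintegral_swap hkm.aemeasurable]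
        calc ∫⁻ ξ, ∫⁻ z, g ξ * kk n (2 * (2 * r)) ξ z ∂σ
            = ∫⁻ ξ, g ξ * ∫⁻ z, kk n (2 * (2 * r)) ξ z ∂σ := by
              refine lintegral_congr fun ξ => ?_
              rw [lintegral_const_mul _ (measurable_kk_right n _ ξ)]
          _ ≤ ∫⁻ ξ, A * (g ξ * ENNReal.ofReal (weightW n d Γ ξ)) := by
              refine lintegral_mono fun ξ => ?_
              by_cases hξ : ξ ∈ U
              · have hpos : 0 < infDist ξ Γ := (hΓ.notMem_iff_infDist_pos hne).1 hξ.2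
                have := mul_le_mul_right (sigma_kk hA hne hdn hC₀ x hm (r := r)
                  (by positivity : 0 < 2 * (2 * r)) ξ hpos) (g ξ)
                refine this.trans (le_of_eq ?_)
                rw [← hAdef]; ring
              · simp [hg, indicator_of_notMem hξ]
          _ = A * ∫⁻ ξ, g ξ * ENNReal.ofReal (weightW n d Γ ξ) := by
              exact lintegral_const_mul _ (hgm.mul hwm)
          _ ≤ _ := by
              refine mul_le_mul_right ?_ _
              rw [measW, setLIntegral_withDensity_eq_setLIntegral_mul_non_measurable _ hwm
                _ measurableSet_ball (Eventually.of_forall fun _ => ENNReal.ofReal_lt_top)]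
              calc ∫⁻ ξ, g ξ * ENNReal.ofReal (weightW n d Γ ξ)
                  = ∫⁻ ξ in U, g ξ * ENNReal.ofReal (weightW n d Γ ξ) := by
                    symm
                    refine setLIntegral_eq_of_support_subset ?_
                    intro ξ hξ
                    by_contra h
                    exact hξ (by simp [hg, indicator_of_notMem h])
                _ = ∫⁻ ξ in U, ENNReal.ofReal (weightW n d Γ ξ) * ‖v ξ‖ₑ := by
                    refine lintegral_congr_ae ?_
                    filter_upwards [hgv] with y hy
                    rw [hy, mul_comm]
                _ ≤ _ := lintegral_mono_set sdiff_subset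

/-- boundary Poincaré inequality for functions with vanishing trace. -/
theorem statement6 (n : ℕ) (hn : 2 ≤ n) (d C₀ : ℝ) (hd0 : 0 < d)
    (hdn : d < (n : ℝ) - 1) (hC₀ : 1 ≤ C₀) :
    ∃ C : ℝ, 0 < C ∧
      ∀ Γ : Set (Euc n), Γ.Nonempty → IsClosed Γ → AhlforsRegular n d C₀ Γ →
        ∀ u v, MemW n d Γ u v → LocallyIntegrable u volume →
          ∀ x ∈ Γ, ∀ r : ℝ, 0 < r →
            (∀ᵐ z ∂(μH[d].restrict (Γ ∩ ball x r)), HasTraceAt u z 0) →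
            ⨍ y in ball x r, |u y| ≤
              C * r ^ (-d) * ∫ y in ball x r, ‖v y‖ ∂(measW n d Γ) := by
  set ω := (volume (ball (0 : Euc n) 1)).toReal with hω
  have hω0 : 0 < ω := ENNReal.toReal_pos (measure_ball_pos volume _ one_pos).ne'
    measure_ball_lt_top.ne
  have hc0 : 0 < C₀ := by linarith
  have hdd : 0 < (n : ℝ) - 1 - d := by linarith
  set A := C₀ * 2 ^ d / ((n : ℝ) - 1 - d) with hA0
  have hApos : 0 < A := by positivity
  refine ⟨C₀ * (2 * ((1 + 2 ^ n) * 2 ^ n) * A * 4 ^ ((n : ℝ) - 1)) / ω, by positivity, ?_⟩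
  intro Γ hne hΓ hA u v hW hu x hx r hr ht
  have hcore := core hA hne hdn hC₀ hΓ hW hu hx hr ht
  have hvi := grad_int hA hne hdn hC₀ hΓ hW hx hr
  have hui : IntegrableOn u (ball x r) volume :=
    (hu.integrableOn_isCompact (isCompact_closedBall x r)).mono_set ball_subset_closedBall
  set J := ∫ y in ball x r, ‖v y‖ ∂(measW n d Γ) with hJ
  set i := ∫ y in ball x r, |u y| with hi
  have hJ0 : 0 ≤ J := integral_nonneg fun y => norm_nonneg _
  have hi0 : 0 ≤ i := integral_nonneg fun y => abs_nonneg _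
  have eJ : ∫⁻ y in ball x r, ‖v y‖ₑ ∂(measW n d Γ) = ENNReal.ofReal J := by
    rw [hJ, ofReal_integral_norm_eq_lintegral_enorm hvi]
  have ei : ∫⁻ y in ball x r, ‖u y‖ₑ = ENNReal.ofReal i := by
    rw [hi, ← ofReal_integral_norm_eq_lintegral_enorm hui]
    rfl
  have ec : ((1 : ℝ≥0∞) + 2 ^ n) * 2 ^ n = ENNReal.ofReal ((1 + 2 ^ n) * 2 ^ n) := by
    rw [ENNReal.ofReal_mul (by positivity), ENNReal.ofReal_add (by positivity) (by positivity),
      ENNReal.ofReal_pow (by positivity)]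
    norm_num
  have hX : 0 ≤ A * (2 * (2 * r)) ^ ((n : ℝ) - 1) := by positivity
  rw [eJ, ei, ec, ← ENNReal.ofReal_mul hX, ← ENNReal.ofReal_mul hi0,
    ← ENNReal.ofReal_mul (by positivity), ← ENNReal.ofReal_mul (by positivity),
    ENNReal.ofReal_le_ofReal_iff (by positivity)] at hcore
  have evol : (volume : Measure (Euc n)).real (ball x r) = r ^ n * ω := by
    rw [measureReal_def, vol_ball n x hr, ENNReal.toReal_mul, ENNReal.toReal_ofReal (by positivity)]
  rw [setAverage_eq, evol, smul_eq_mul, ← hi]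
  have e4 : (2 * (2 * r)) ^ ((n : ℝ) - 1) = 4 ^ ((n : ℝ) - 1) * r ^ ((n : ℝ) - 1) := by
    rw [← Real.mul_rpow (by norm_num) hr.le]; ring_nf
  have er : r * r ^ ((n : ℝ) - 1) = r ^ n := by
    rw [Real.rpow_sub_one hr.ne', Real.rpow_natCast]; field_simp
  have ed : r ^ (-d) = (r ^ d)⁻¹ := Real.rpow_neg hr.le d
  have hrd : 0 < r ^ d := Real.rpow_pos_of_pos hr d
  have hrn : 0 < r ^ n := pow_pos hr n
  have h5 : i * (C₀⁻¹ * r ^ d) ≤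
      r ^ n * (2 * ((1 + 2 ^ n) * 2 ^ n) * A * 4 ^ ((n : ℝ) - 1) * J) := by
    refine hcore.trans (le_of_eq ?_)
    rw [e4, ← er]; ring
  set Q := 2 * ((1 + 2 ^ n) * 2 ^ n) * A * 4 ^ ((n : ℝ) - 1) with hQ
  rw [ed]
  have h6 : (r ^ n * ω)⁻¹ * i = (r ^ n * ω)⁻¹ * (C₀ * (r ^ d)⁻¹) * (i * (C₀⁻¹ * r ^ d)) := by
    field_simp
  rw [h6]
  calc _ ≤ (r ^ n * ω)⁻¹ * (C₀ * (r ^ d)⁻¹) * (r ^ n * (Q * J)) := by gcongr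
    _ = _ := by field_simp
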